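/- Let 𝔫 be a 2-step nilpotent finite-dimensional real Lie algebra with inner product ⟨·,·⟩ which is irreducible, i.e. 𝔫 cannot be written as an orthogonal direct sum of two non-zero Lie ideals, and let T be an invertible Killing–Yano tensor on (𝔫,⟨·,·⟩). Then the center 𝔷 equals the commutator ideal 𝔫' = ⁅𝔫,𝔫⁆, and there exists a real number a ≠ 0 such that T²v = −a²·v for all v ∈ 𝔳 = 𝔷^⊥ and T²z = −9a²·z for all z ∈ 𝔷. -/

import Mathlib

/-- `x` belongs to the center of the Lie algebra `V`. -/
def IsCentral {V : Type*} [LieRing V] (x : V) : Prop := ∀ y : V, ⁅x, y⁆ = 0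

/-- Membership in `𝔳 = 𝔷^⊥`, the orthogonal complement of the center with respect to the
inner product `B`. -/
def InVperp {V : Type*} [LieRing V] [LieAlgebra ℝ V]
    (B : V →ₗ[ℝ] V →ₗ[ℝ] ℝ) (x : V) : Prop :=
  ∀ z : V, IsCentral z → B x z = 0

/-- The Lie algebra `V` is 2-step nilpotent: non-abelian and `⁅⁅V,V⁆,V⁆ = 0`. -/
def TwoStepNilpotent (V : Type*) [LieRing V] : Prop :=
  (∃ x y : V, ⁅x, y⁆ ≠ 0) ∧ ∀ x y z : V, ⁅⁅x, y⁆, z⁆ = 0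

/-- A Killing–Yano tensor on `(V, B)`: a skew-symmetric endomorphism preserving the center
and satisfying `T⁅x,y⁆ = 3⁅Tx,y⁆` for `x, y ∈ 𝔳 = 𝔷^⊥`. -/
def IsKY {V : Type*} [LieRing V] [LieAlgebra ℝ V]
    (B : V →ₗ[ℝ] V →ₗ[ℝ] ℝ) (T : V →ₗ[ℝ] V) : Prop :=
  (∀ x y : V, B (T x) y = - B x (T y)) ∧
  (∀ z : V, IsCentral z → IsCentral (T z)) ∧
  (∀ x y : V, InVperp B x → InVperp B y → T ⁅x, y⁆ = (3 : ℝ) • ⁅T x, y⁆)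

/-- The Koszul formula characterizing the Levi-Civita product of `(V, B)`. -/
def IsLeviCivita {V : Type*} [LieRing V] [LieAlgebra ℝ V]
    (B : V →ₗ[ℝ] V →ₗ[ℝ] ℝ) (nab : V → V → V) : Prop :=
  ∀ x y z : V, 2 * B (nab x y) z = B ⁅x, y⁆ z - B ⁅y, z⁆ x + B ⁅z, x⁆ y

/-!
Divide the Killing–Yano tensor `T` by `3` on `𝔷` and leave it unchanged on `𝔳`. The Killing–Yano
identity says exactly that the resulting skew-adjoint endomorphism `f` commutes with every `ad x`.
Hence `f²` is self-adjoint and commutes with every `ad x`, so the kernel and the range of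
`f² - μ` are complementary orthogonal ideals for each eigenvalue `μ`, and irreducibility forces
`f² = μ`; skew-adjointness makes `μ` negative as soon as `T ≠ 0`. For `𝔷 = 𝔫'`, split off the part
of the center orthogonal to `𝔫'`: it is an ideal because it is central, and its orthogonal
complement is an ideal because it contains `𝔫'`.
-/

open LieAlgebra

section BilinearForm

variable {K V : Type*} [Field K] [AddCommGroup V] [Module K V] [FiniteDimensional K V]
  {B : LinearMap.BilinForm K V}

theorem isCompl_orthogonal_of_anisotropic (hrefl : B.IsRefl) (hB : ∀ x, B x x = 0 → x = 0)
    (W : Submodule K V) : IsCompl W (B.orthogonal W) :=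
  (LinearMap.BilinForm.isCompl_orthogonal_iff_disjoint hrefl).2 <|
    Submodule.disjoint_def.2 fun x hx hx' ↦ hB x (hx' x hx)

theorem isCompl_ker_range_of_isSelfAdjoint (hB : ∀ x, B x x = 0 → x = 0) {f : V →ₗ[K] V}
    (hf : B.IsSelfAdjoint f) : IsCompl (LinearMap.ker f) (LinearMap.range f) := by
  rw [Submodule.isCompl_iff_disjoint _ _ (by rw [add_comm, f.finrank_range_add_finrank_ker]),
    Submodule.disjoint_def]
  rintro _ hx ⟨y, rfl⟩
  refine hB _ ?_
  rw [← hf, LinearMap.mem_ker.1 hx, map_zero, LinearMap.zero_apply]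

end BilinearForm

theorem exists_hasEigenvalue_of_isSelfAdjoint {V : Type*} [AddCommGroup V] [Module ℝ V]
    [FiniteDimensional ℝ V] [Nontrivial V] {B : LinearMap.BilinForm ℝ V} (hsymm : B.IsSymm)
    (hpos : ∀ x, x ≠ 0 → 0 < B x x) {f : Module.End ℝ V} (hf : B.IsSelfAdjoint f) :
    ∃ μ, f.HasEigenvalue μ := by
  let core : InnerProductSpace.Core ℝ V :=
    { inner x y := B x y
      conj_inner_symm x y := hsymm.eq y x
      re_inner_nonneg x := by
        obtain rfl | hx := eq_or_ne x 0
        · simp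
        · exact (hpos x hx).le
      add_left x y z := by simp
      smul_left x y r := by simp
      definite x := not_imp_not.1 fun hx ↦ (hpos x hx).ne' }
  let _ : NormedAddCommGroup V := core.toNormedAddCommGroup
  let _ : InnerProductSpace ℝ V := .ofCore core.toCore
  have hf' : f.IsSymmetric := hf
  exact ⟨_, hf'.hasEigenvalue_iSup_of_finiteDimensional⟩

theorem IsCentral.lie_right {L : Type*} [LieRing L] {x : L} (hx : IsCentral x) (y : L) :
    ⁅y, x⁆ = 0 := by
  rw [← lie_skew, hx y, neg_zero]

theorem isCentral_iff_mem_center {R L : Type*} [CommRing R] [LieRing L] [LieAlgebra R L] {x : L} :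
    IsCentral x ↔ x ∈ center R L :=
  forall_congr' fun y ↦ by rw [← lie_skew, neg_eq_zero]

/-- A Lie algebra with a bilinear form is orthogonally irreducible if it is not the orthogonal
direct sum of two non-zero ideals. -/
def IsOrthogonallyIrreducible {K L : Type*} [Field K] [LieRing L] [LieAlgebra K L]
    (B : LinearMap.BilinForm K L) : Prop :=
  ∀ I J : LieIdeal K L, IsCompl I J → (∀ x ∈ I, ∀ y ∈ J, B x y = 0) → I = ⊥ ∨ J = ⊥

namespace IsOrthogonallyIrreducible

section Field

variable {K L : Type*} [Field K] [LieRing L] [LieAlgebra K L]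
  {B : LinearMap.BilinForm K L}

theorem of_not_exists_submodule (h : ¬ ∃ I₁ I₂ : Submodule K L, I₁ ≠ ⊥ ∧ I₂ ≠ ⊥ ∧
      (∀ x : L, ∀ y ∈ I₁, ⁅x, y⁆ ∈ I₁) ∧ (∀ x : L, ∀ y ∈ I₂, ⁅x, y⁆ ∈ I₂) ∧
      (∀ x ∈ I₁, ∀ y ∈ I₂, B x y = 0) ∧ I₁ ⊓ I₂ = ⊥ ∧ I₁ ⊔ I₂ = ⊤) :
    IsOrthogonallyIrreducible B := by
  intro I J hIJ horth
  have hIJ' : IsCompl I.toSubmodule J.toSubmodule := LieSubmodule.isCompl_toSubmodule.2 hIJ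
  by_contra! hne
  exact h ⟨I.toSubmodule, J.toSubmodule, (LieSubmodule.toSubmodule_eq_bot I).not.2 hne.1,
    (LieSubmodule.toSubmodule_eq_bot J).not.2 hne.2, fun _ _ ↦ I.lie_mem, fun _ _ ↦ J.lie_mem,
    horth, hIJ'.inf_eq_bot, hIJ'.sup_eq_top⟩

variable [FiniteDimensional K L]

theorem toSubmodule_center_eq_span_lie (hirr : IsOrthogonallyIrreducible B) (hrefl : B.IsRefl)
    (hB : ∀ x, B x x = 0 → x = 0) (h2 : TwoStepNilpotent L) :
    (center K L).toSubmodule = Submodule.span K {u : L | ∃ a b : L, u = ⁅a, b⁆} := by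
  set D : Submodule K L := Submodule.span K {u : L | ∃ a b : L, u = ⁅a, b⁆}
  have lie_mem_D (x y : L) : ⁅x, y⁆ ∈ D := Submodule.subset_span ⟨x, y, rfl⟩
  have D_le_center : D ≤ (center K L).toSubmodule := by
    rw [Submodule.span_le]
    rintro _ ⟨x, y, rfl⟩
    exact isCentral_iff_mem_center.1 (h2.2 x y)
  have D_ne_bot : D ≠ ⊥ := by
    obtain ⟨x, y, hxy⟩ := h2.1
    exact fun h ↦ hxy ((Submodule.mem_bot K).1 (h ▸ lie_mem_D x y))
  let W : Submodule K L := (center K L).toSubmodule ⊓ B.orthogonal D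
  have D_le_orthogonal : D ≤ B.orthogonal W := fun d hd w hw ↦ hrefl _ _ (hw.2 d hd)
  let I : LieIdeal K L := { W with lie_mem {x w} hw := (hw.1 x).symm ▸ W.zero_mem }
  let J : LieIdeal K L := { B.orthogonal W with lie_mem _ := D_le_orthogonal (lie_mem_D _ _) }
  have hIJ : IsCompl I J :=
    LieSubmodule.isCompl_toSubmodule.1 (isCompl_orthogonal_of_anisotropic hrefl hB W)
  have hJ : J ≠ ⊥ := fun hJ ↦
    D_ne_bot (eq_bot_mono D_le_orthogonal (congrArg LieSubmodule.toSubmodule hJ))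
  have hI : I = ⊥ := (hirr I J hIJ fun x hx y hy ↦ hy x hx).resolve_right hJ
  have hW : W = ⊥ := congrArg LieSubmodule.toSubmodule hI
  have hD : D ⊔ B.orthogonal D = ⊤ := (isCompl_orthogonal_of_anisotropic hrefl hB D).sup_eq_top
  exact (eq_of_le_of_inf_le_of_sup_le D_le_center (hW.trans_le bot_le)
    (le_top.trans_eq hD.symm)).symm

theorem apply_eq_smul_of_hasEigenvalue (hirr : IsOrthogonallyIrreducible B)
    (hB : ∀ x, B x x = 0 → x = 0) {f : L →ₗ⁅K,L⁆ L} (hf : B.IsSelfAdjoint f) {μ : K}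
    (hμ : Module.End.HasEigenvalue (f : L →ₗ[K] L) μ) (x : L) : f x = μ • x := by
  let g : L →ₗ⁅K,L⁆ L := f - μ • LieModuleHom.id
  have g_apply (y : L) : g y = f y - μ • y := rfl
  have hg : B.IsSelfAdjoint g := fun y z ↦ by simp [g_apply, hf y z]
  have hcompl : IsCompl g.ker g.range :=
    LieSubmodule.isCompl_toSubmodule.1 (isCompl_ker_range_of_isSelfAdjoint hB hg)
  have horth : ∀ y ∈ g.ker, ∀ z ∈ g.range, B y z = 0 := by
    rintro y hy _ ⟨z, rfl⟩
    rw [← hg, LieModuleHom.mem_ker.1 hy, map_zero, LinearMap.zero_apply]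
  have hker : g.ker ≠ ⊥ := by
    obtain ⟨v, hv⟩ := hμ.exists_hasEigenvector
    have hv_mem : v ∈ g.ker := sub_eq_zero.2 hv.apply_eq_smul
    exact fun h ↦ hv.2 ((LieSubmodule.mem_bot v).1 (h ▸ hv_mem))
  have hrange : g.range = ⊥ := (hirr _ _ hcompl horth).resolve_left hker
  have hgx : g x ∈ g.range := ⟨x, rfl⟩
  exact sub_eq_zero.1 ((LieSubmodule.mem_bot _).1 (hrange ▸ hgx))

end Field

theorem exists_sq_eq_neg_of_isSkewAdjoint {L : Type*} [LieRing L] [LieAlgebra ℝ L]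
    [FiniteDimensional ℝ L] {B : LinearMap.BilinForm ℝ L} (hirr : IsOrthogonallyIrreducible B)
    (hsymm : B.IsSymm) (hpos : ∀ x, x ≠ 0 → 0 < B x x) {f : L →ₗ⁅ℝ,L⁆ L}
    (hf : B.IsSkewAdjoint f) (hf0 : f ≠ 0) :
    ∃ a : ℝ, a ≠ 0 ∧ ∀ x, f (f x) = -(a ^ 2) • x := by
  have hskew (x y : L) : B (f x) y = -B x (f y) := by
    rw [hf x y, Pi.neg_apply, map_neg]
  have hsq : B.IsSelfAdjoint (f.comp f) := fun x y ↦ by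
    simp only [LieModuleHom.comp_apply, hskew, neg_neg]
  obtain ⟨x, hx⟩ : ∃ x, f x ≠ 0 := not_forall.1 fun h ↦ hf0 (LieModuleHom.ext h)
  have hx0 : x ≠ 0 := fun h ↦ hx (by rw [h, map_zero])
  have : Nontrivial L := ⟨x, 0, hx0⟩
  obtain ⟨μ, hμ⟩ := exists_hasEigenvalue_of_isSelfAdjoint hsymm hpos
    (f := (f.comp f : L →ₗ⁅ℝ,L⁆ L)) hsq
  have hμ_smul (y : L) : f (f y) = μ • y :=
    hirr.apply_eq_smul_of_hasEigenvalue (fun y ↦ not_imp_not.1 fun hy ↦ (hpos y hy).ne') hsq hμ y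
  have hμ_mul : μ * B x x = -B (f x) (f x) := by
    rw [← hskew, hμ_smul, map_smul, LinearMap.smul_apply, smul_eq_mul]
  have hμ_neg : μ < 0 := by
    refine neg_of_mul_neg_left ?_ (hpos x hx0).le
    rw [hμ_mul]
    exact neg_neg_of_pos (hpos _ hx)
  refine ⟨√(-μ), (Real.sqrt_pos.2 (neg_pos.2 hμ_neg)).ne', fun y ↦ ?_⟩
  rw [Real.sq_sqrt (neg_pos.2 hμ_neg).le, neg_neg, hμ_smul]

end IsOrthogonallyIrreducible

section KillingYano

variable {V : Type*} [LieRing V] [LieAlgebra ℝ V] {B : LinearMap.BilinForm ℝ V} {T : V →ₗ[ℝ] V}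

theorem inVperp_iff_mem_orthogonal_center (hsymm : B.IsSymm) {x : V} :
    InVperp B x ↔ x ∈ B.orthogonal (center ℝ V).toSubmodule :=
  forall_congr' fun z ↦ imp_congr isCentral_iff_mem_center (by rw [← hsymm.eq x z])

theorem isCompl_orthogonal_center [FiniteDimensional ℝ V] (hsymm : B.IsSymm)
    (hB : ∀ x, B x x = 0 → x = 0) :
    IsCompl (B.orthogonal (center ℝ V).toSubmodule) (center ℝ V).toSubmodule :=
  (isCompl_orthogonal_of_anisotropic hsymm.isRefl hB _).symm

theorem exists_inVperp_add_isCentral [FiniteDimensional ℝ V] (hsymm : B.IsSymm)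
    (hB : ∀ x, B x x = 0 → x = 0) (x : V) :
    ∃ v z, InVperp B v ∧ IsCentral z ∧ v + z = x := by
  have hx : x ∈ B.orthogonal (center ℝ V).toSubmodule ⊔ (center ℝ V).toSubmodule :=
    (isCompl_orthogonal_center hsymm hB).sup_eq_top ▸ Submodule.mem_top
  obtain ⟨v, hv, z, hz, rfl⟩ := Submodule.mem_sup.1 hx
  exact ⟨v, z, (inVperp_iff_mem_orthogonal_center hsymm).2 hv, isCentral_iff_mem_center.2 hz, rfl⟩

namespace IsKY

theorem inVperp_apply (hT : IsKY B T) {v : V} (hv : InVperp B v) : InVperp B (T v) :=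
  fun z hz ↦ by rw [hT.1, hv _ (hT.2.1 z hz), neg_zero]

theorem apply_lie_right (hT : IsKY B T) {v w : V} (hv : InVperp B v) (hw : InVperp B w) :
    T ⁅v, w⁆ = (3 : ℝ) • ⁅v, T w⁆ := by
  rw [← lie_skew, map_neg, hT.2.2 w v hw hv, ← lie_skew v, smul_neg]

end IsKY

/-- The center rescaling of an endomorphism `T`, equal to `T` on `𝔳` and to `T / 3` on `𝔷`. It turns
the factor `3` of the Killing–Yano identity into `1`. It is encoded as a relation between `T` and
its rescaling `f`. -/
def IsCenterRescaling (B : LinearMap.BilinForm ℝ V) (T f : V →ₗ[ℝ] V) : Prop :=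
  (∀ v, InVperp B v → f v = T v) ∧ ∀ z, IsCentral z → f z = (1 / 3 : ℝ) • T z

theorem exists_isCenterRescaling [FiniteDimensional ℝ V] (hsymm : B.IsSymm)
    (hB : ∀ x, B x x = 0 → x = 0) (T : V →ₗ[ℝ] V) : ∃ f, IsCenterRescaling B T f := by
  have hcompl := isCompl_orthogonal_center hsymm hB
  refine ⟨LinearMap.ofIsCompl hcompl (T.domRestrict _) ((1 / 3 : ℝ) • T.domRestrict _),
    fun v hv ↦ ?_, fun z hz ↦ ?_⟩
  · exact LinearMap.ofIsCompl_apply_left hcompl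
      ⟨v, (inVperp_iff_mem_orthogonal_center hsymm).1 hv⟩
  · exact LinearMap.ofIsCompl_apply_right hcompl ⟨z, isCentral_iff_mem_center.1 hz⟩

namespace IsCenterRescaling

variable [FiniteDimensional ℝ V] {f : V →ₗ[ℝ] V}

theorem isSkewAdjoint (hf : IsCenterRescaling B T f) (hT : IsKY B T) (hsymm : B.IsSymm)
    (hB : ∀ x, B x x = 0 → x = 0) : B.IsSkewAdjoint f := by
  intro x y
  obtain ⟨v, z, hv, hz, rfl⟩ := exists_inVperp_add_isCentral hsymm hB x
  obtain ⟨w, u, hw, hu, rfl⟩ := exists_inVperp_add_isCentral hsymm hB y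
  have hTvu : B (T v) u = 0 := hT.inVperp_apply hv u hu
  have hTzw : B (T z) w = 0 := (hsymm.eq _ _).symm.trans (hw _ (hT.2.1 z hz))
  have hvTu : B v (T u) = 0 := hv _ (hT.2.1 u hu)
  have hzTw : B z (T w) = 0 := (hsymm.eq _ _).symm.trans (hT.inVperp_apply hw z hz)
  simp only [Pi.neg_apply, map_add, map_neg, map_smul, LinearMap.add_apply, LinearMap.smul_apply,
    hf.1 v hv, hf.1 w hw, hf.2 z hz, hf.2 u hu, hTvu, hTzw, hvTu, hzTw, hT.1 v w, hT.1 z u]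
  module

theorem map_lie (hf : IsCenterRescaling B T f) (hT : IsKY B T) (hsymm : B.IsSymm)
    (hB : ∀ x, B x x = 0 → x = 0) (hlie : ∀ x y : V, IsCentral ⁅x, y⁆) (x y : V) :
    f ⁅x, y⁆ = ⁅x, f y⁆ := by
  obtain ⟨v, z, hv, hz, rfl⟩ := exists_inVperp_add_isCentral hsymm hB x
  obtain ⟨w, u, hw, hu, rfl⟩ := exists_inVperp_add_isCentral hsymm hB y
  have hfu : IsCentral (f u) := fun t ↦ by
    rw [hf.2 u hu, smul_lie, hT.2.1 u hu, smul_zero]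
  have hleft : ⁅v + z, w + u⁆ = ⁅v, w⁆ := by
    rw [add_lie, lie_add, hz, hu.lie_right, add_zero, add_zero]
  have hright : ⁅v + z, f (w + u)⁆ = ⁅v, T w⁆ := by
    rw [add_lie, map_add, lie_add, hz, hfu.lie_right, add_zero, add_zero, hf.1 w hw]
  calc f ⁅v + z, w + u⁆ = (1 / 3 : ℝ) • T ⁅v, w⁆ := by rw [hleft, hf.2 _ (hlie v w)]
    _ = ⁅v, T w⁆ := by rw [hT.apply_lie_right hv hw]; module
    _ = ⁅v + z, f (w + u)⁆ := hright.symm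

end IsCenterRescaling

theorem IsKY.exists_sq_eq_neg [FiniteDimensional ℝ V] (hT : IsKY B T) (hT0 : T ≠ 0)
    (hirr : IsOrthogonallyIrreducible B) (hsymm : B.IsSymm) (hpos : ∀ x, x ≠ 0 → 0 < B x x)
    (hlie : ∀ x y : V, IsCentral ⁅x, y⁆) :
    ∃ a : ℝ, a ≠ 0 ∧ (∀ v, InVperp B v → T (T v) = -(a ^ 2) • v) ∧
      ∀ z, IsCentral z → T (T z) = -(9 * a ^ 2) • z := by
  have hB (x : V) : B x x = 0 → x = 0 := not_imp_not.1 fun hx ↦ (hpos x hx).ne'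
  obtain ⟨f, hf⟩ := exists_isCenterRescaling hsymm hB T
  let g : V →ₗ⁅ℝ,V⁆ V := { f with map_lie' := hf.map_lie hT hsymm hB hlie _ _ }
  have hTv (v : V) (hv : InVperp B v) : T v = g v := (hf.1 v hv).symm
  have hTz (z : V) (hz : IsCentral z) : T z = (3 : ℝ) • g z := by
    change T z = (3 : ℝ) • f z
    rw [hf.2 z hz]
    module
  have hg0 : g ≠ 0 := fun h ↦ hT0 <| LinearMap.ext fun x ↦ by
    obtain ⟨v, z, hv, hz, rfl⟩ := exists_inVperp_add_isCentral hsymm hB x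
    simp [hTv v hv, hTz z hz, h]
  obtain ⟨a, ha, hsq⟩ :=
    hirr.exists_sq_eq_neg_of_isSkewAdjoint hsymm hpos (hf.isSkewAdjoint hT hsymm hB) hg0
  refine ⟨a, ha, fun v hv ↦ ?_, fun z hz ↦ ?_⟩
  · rw [hTv _ (hT.inVperp_apply hv), hTv v hv, hsq]
  · rw [hTz _ (hT.2.1 z hz), hTz z hz, map_smul, hsq]
    module

end KillingYano

theorem statement_12_general (V : Type*) [LieRing V] [LieAlgebra ℝ V] [FiniteDimensional ℝ V]
    (B : V →ₗ[ℝ] V →ₗ[ℝ] ℝ)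
    (hsymm : ∀ x y : V, B x y = B y x) (hpos : ∀ x : V, x ≠ 0 → 0 < B x x)
    (h2 : TwoStepNilpotent V)
    (hirr : ¬ ∃ I₁ I₂ : Submodule ℝ V, I₁ ≠ ⊥ ∧ I₂ ≠ ⊥ ∧
      (∀ x : V, ∀ y ∈ I₁, ⁅x, y⁆ ∈ I₁) ∧ (∀ x : V, ∀ y ∈ I₂, ⁅x, y⁆ ∈ I₂) ∧
      (∀ x ∈ I₁, ∀ y ∈ I₂, B x y = 0) ∧ I₁ ⊓ I₂ = ⊥ ∧ I₁ ⊔ I₂ = ⊤)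
    (T : V →ₗ[ℝ] V) (hT : IsKY B T) (hT0 : T ≠ 0) :
    (∀ x : V, IsCentral x ↔ x ∈ Submodule.span ℝ {u : V | ∃ a b : V, u = ⁅a, b⁆}) ∧
    ∃ a : ℝ, a ≠ 0 ∧ (∀ v : V, InVperp B v → T (T v) = -(a ^ 2) • v) ∧
      (∀ z : V, IsCentral z → T (T z) = -(9 * a ^ 2) • z) := by
  have hB : LinearMap.BilinForm.IsSymm B := ⟨hsymm⟩
  have haniso (x : V) : B x x = 0 → x = 0 := not_imp_not.1 fun hx ↦ (hpos x hx).ne'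
  have hirr' : IsOrthogonallyIrreducible B := .of_not_exists_submodule hirr
  have hcenter := hirr'.toSubmodule_center_eq_span_lie hB.isRefl haniso h2
  exact ⟨fun x ↦ isCentral_iff_mem_center.trans (SetLike.ext_iff.1 hcenter x),
    hT.exists_sq_eq_neg hT0 hirr' hB hpos h2.2⟩

/-- on an irreducible 2-step nilpotent metric Lie algebra with an
invertible KY tensor T, the center equals the commutator ideal and
T² = -a²·Id on 𝔳, T² = -9a²·Id on 𝔷, for some a ≠ 0. -/
theorem statement_12 (V : Type*) [LieRing V] [LieAlgebra ℝ V] [FiniteDimensional ℝ V]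
    (B : V →ₗ[ℝ] V →ₗ[ℝ] ℝ)
    (hsymm : ∀ x y : V, B x y = B y x) (hpos : ∀ x : V, x ≠ 0 → 0 < B x x)
    (h2 : TwoStepNilpotent V)
    (hirr : ¬ ∃ I₁ I₂ : Submodule ℝ V, I₁ ≠ ⊥ ∧ I₂ ≠ ⊥ ∧
      (∀ x : V, ∀ y ∈ I₁, ⁅x, y⁆ ∈ I₁) ∧ (∀ x : V, ∀ y ∈ I₂, ⁅x, y⁆ ∈ I₂) ∧
      (∀ x ∈ I₁, ∀ y ∈ I₂, B x y = 0) ∧ I₁ ⊓ I₂ = ⊥ ∧ I₁ ⊔ I₂ = ⊤)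
    (T : V →ₗ[ℝ] V) (hT : IsKY B T) (hbij : Function.Bijective T) :
    (∀ x : V, IsCentral x ↔ x ∈ Submodule.span ℝ {u : V | ∃ a b : V, u = ⁅a, b⁆}) ∧
    ∃ a : ℝ, a ≠ 0 ∧ (∀ v : V, InVperp B v → T (T v) = -(a ^ 2) • v) ∧
      (∀ z : V, IsCentral z → T (T z) = -(9 * a ^ 2) • z) := by
  obtain ⟨x, y, hxy⟩ := h2.1
  exact statement_12_general V B hsymm hpos h2 hirr T hT fun h ↦ hxy (hbij.1 (by simp [h]))
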